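/- The class 𝒜 of all subsets of X^ω having the Automatic Baire property is a Boolean algebra: if F and G have the Automatic Baire property, then so do F ∪ G, F ∩ G and X^ω \ F. -/

import Mathlib

open Set MeasureTheory Computability

namespace AutoBaire

/-- The Cantor topology on the space of ω-words over `X`:
the product of the discrete topology on `X`. -/
def cantorTop (X : Type) : TopologicalSpace (ℕ → X) :=
  @Pi.topologicalSpace ℕ (fun _ => X) (fun _ => ⊥)

/-- The Borel σ-algebra of the Cantor space. -/
def cantorBorel (X : Type) : MeasurableSpace (ℕ → X) :=
  @borel (ℕ → X) (cantorTop X)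

variable {X : Type}

/-- Concatenation `w·ξ` of a finite word with an ω-word. -/
def wcat (w : List X) (ξ : ℕ → X) : ℕ → X :=
  Stream'.appendStream' w ξ

/-- The ball (cylinder) `w·X^ω`. -/
def cyl (w : List X) : Set (ℕ → X) := {ξ | ∃ η : ℕ → X, ξ = wcat w η}

/-- The ω-language `W·A` for a language `W` and an ω-language `A`. -/
def catOmega (W : Language X) (A : Set (ℕ → X)) : Set (ℕ → X) :=
  {ξ | ∃ w ∈ W, ∃ η ∈ A, ξ = wcat w η}

/-- `V^ω`: the set of ω-words that are infinite concatenations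
`v₁·v₂·⋯` of non-empty words `vᵢ ∈ V`. -/
def omegaPow (V : Language X) : Set (ℕ → X) :=
  {ξ | ∃ f : ℕ → List X, (∀ i, f i ∈ V ∧ f i ≠ []) ∧
    ∀ k, ξ ∈ cyl (((List.range k).map f).flatten)}

/-- Regular languages: those obtained from finite languages via the operations
union, concatenation and star. -/
inductive IsRegLang : Language X → Prop
  | finite (W : Language X) : (W : Set (List X)).Finite → IsRegLang W
  | union (W V : Language X) : IsRegLang W → IsRegLang V → IsRegLang (W + V)
  | concat (W V : Language X) : IsRegLang W → IsRegLang V → IsRegLang (W * V)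
  | star (W : Language X) : IsRegLang W → IsRegLang (W∗)

/-- Regular ω-languages: finite unions `⋃ᵢ Wᵢ·Vᵢ^ω` with `Wᵢ, Vᵢ` regular. -/
def IsRegOmega (F : Set (ℕ → X)) : Prop :=
  ∃ (n : ℕ) (W V : Fin n → Language X),
    (∀ i, IsRegLang (W i) ∧ IsRegLang (V i)) ∧
    F = ⋃ i, catOmega (W i) (omegaPow (V i))

/-- `X*·w·X^ω`: the set of ω-words containing `w` as an infix. -/
def infixOcc (w : List X) : Set (ℕ → X) :=
  {ξ | ∃ u : List X, ξ ∈ cyl (u ++ w)}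

/-- An ω-word is disjunctive if every finite word occurs in it as an infix. -/
def Disjunctive (ξ : ℕ → X) : Prop := ∀ w : List X, ξ ∈ infixOcc w

/-- Ultimately periodic ω-words: `ξ = w·v·v·v·⋯` with `v ≠ e`. -/
def UltPeriodic (ξ : ℕ → X) : Prop :=
  ∃ (w v : List X) (h : v ≠ []), ξ = wcat w (Stream'.cycle v h)

/-- The Automatic Baire property: `F Δ E ⊆ F'` for some regular open
ω-language `E` and some regular ω-language `F'` of first Baire category. -/
def HasABP (F : Set (ℕ → X)) : Prop :=
  ∃ E F' : Set (ℕ → X),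
    IsRegOmega E ∧ @IsOpen _ (cantorTop X) E ∧
    IsRegOmega F' ∧ @IsMeagre _ (cantorTop X) F' ∧
    symmDiff F E ⊆ F'

/-- The measure is finite and non-null: `0 < μ(X^ω) < ∞`. -/
def FiniteNonNull (μ : @MeasureTheory.Measure (ℕ → X) (cantorBorel X)) : Prop :=
  0 < μ Set.univ ∧ μ Set.univ < ⊤

/-- `supp(μ) = X^ω`: every non-empty open set has positive measure. -/
def FullSupport (μ : @MeasureTheory.Measure (ℕ → X) (cantorBorel X)) : Prop :=
  ∀ U : Set (ℕ → X), @IsOpen _ (cantorTop X) U → U.Nonempty → 0 < μ U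

/-- The balance condition: there is `c > 0` such that for all `w ∈ X*`, `x ∈ X`
either `μ(wx·X^ω) = 0` or `c·μ(w·X^ω) ≤ μ(wx·X^ω)`. -/
def Balanced (μ : @MeasureTheory.Measure (ℕ → X) (cantorBorel X)) : Prop :=
  ∃ c : ENNReal, 0 < c ∧ ∀ (w : List X) (x : X),
    μ (cyl (w ++ [x])) = 0 ∨ c * μ (cyl w) ≤ μ (cyl (w ++ [x]))


/-!
By Myhill–Nerode a regular ω-language `E` has only finitely many residuals `w⁻¹·E`, so its residuals
are the states of a finite deterministic automaton. The run of this automaton on `ξ` visits the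
residual `X^ω` exactly when `ξ` is interior to `E` and the residual `∅` exactly when `ξ` is exterior
to `E`, and it never leaves either of them. Hence the exterior and the frontier of `E` are the sets
of ω-words whose run visits infinitely often a given set of residuals, and such sets are regular:
by Kleene's theorem the words leading from one state to another form a regular language, and a
recurrent run is a word leading to some state `q` followed by infinitely many loops at `q`.

If `F` differs from the regular open set `E` by a subset of `F'`, then the complement of `F` differs
from the exterior of `E` by a subset of `F' ∪ frontier E`, and the frontier of an open set is
nowhere dense. Unions are immediate, and intersections follow by De Morgan's laws.
-/

section RegularLanguages

variable {α : Type*} {A B W : Language α} {w y : List α}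

/-- The union of the quotients of `B` by the words `v` with `w ∈ A·v`: the words left to be read in
`A * B` after `w` when the factor from `A` ends within `w`. -/
def splitQuotient (A B : Language α) (w : List α) : Language α :=
  ⨆ v ∈ {v | ∃ u ∈ A, u ++ v = w}, B.leftQuotient v

theorem mem_splitQuotient :
    y ∈ splitQuotient A B w ↔ ∃ u ∈ A, ∃ v, u ++ v = w ∧ v ++ y ∈ B := by
  simp only [splitQuotient, Language.mem_iSup, mem_ofPred_eq, Language.mem_leftQuotient]
  grind

theorem finite_range_splitQuotient (A : Language α) (hB : (range B.leftQuotient).Finite) :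
    (range (splitQuotient A B)).Finite := by
  refine (hB.finite_subsets.image sSup).subset ?_
  rintro _ ⟨w, rfl⟩
  exact ⟨_, image_subset_range _ {v | ∃ u ∈ A, u ++ v = w}, sSup_image⟩

theorem leftQuotient_mul (A B : Language α) (w : List α) :
    (A * B).leftQuotient w = A.leftQuotient w * B + splitQuotient A B w := by
  ext y
  simp only [Language.mem_add, Language.mem_leftQuotient, Language.mem_mul, mem_splitQuotient]
  constructor
  · rintro ⟨a, ha, b, hb, h⟩
    rcases List.append_eq_append_iff.1 h with ⟨c, rfl, rfl⟩ | ⟨c, rfl, rfl⟩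
    · exact .inr ⟨a, ha, c, rfl, hb⟩
    · exact .inl ⟨c, ha, b, hb, rfl⟩
  · rintro (⟨a, ha, b, hb, rfl⟩ | ⟨u, hu, v, rfl, hy⟩)
    · exact ⟨w ++ a, ha, b, hb, List.append_assoc ..⟩
    · exact ⟨u, hu, v ++ y, hy, (List.append_assoc ..).symm⟩

theorem append_mem_kstar {u v : List α} (hu : u ∈ W∗) (hv : v ∈ W∗) : u ++ v ∈ W∗ :=
  kstar_mul_kstar W ▸ Language.append_mem_mul hu hv

theorem mem_kstar_of_mem {u : List α} (hu : u ∈ W) : u ∈ W∗ :=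
  (le_kstar : W ≤ W∗) hu

theorem mem_splitQuotient_kstar_of_append_mem (hw : w ≠ []) (h : w ++ y ∈ W∗) :
    y ∈ splitQuotient W∗ W w * W∗ := by
  obtain ⟨factors, hflat, hW⟩ := Language.mem_kstar.1 h
  clear h
  induction factors generalizing w with
  | nil => simp_all
  | cons a factors ih =>
    rw [List.forall_mem_cons] at hW
    rw [List.flatten_cons, List.append_eq_append_iff] at hflat
    rcases hflat with ⟨c, rfl, rfl⟩ | ⟨c, rfl, hy⟩
    · exact Language.append_mem_mul
        (mem_splitQuotient.2 ⟨[], Language.nil_mem_kstar _, w, rfl, hW.1⟩)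
        (Language.join_mem_kstar hW.2)
    · rcases eq_or_ne c [] with rfl | hc
      · have hnil : [] ∈ splitQuotient W∗ W (a ++ []) :=
          mem_splitQuotient.2 ⟨[], Language.nil_mem_kstar _, a, by simp, by simpa using hW.1⟩
        exact Language.append_mem_mul hnil (Language.mem_kstar.2 ⟨factors, hy.symm, hW.2⟩)
      · obtain ⟨s, hs, t, ht, rfl⟩ := Language.mem_mul.1 (ih hc hy.symm hW.2)
        obtain ⟨u, hu, v, rfl, hv⟩ := mem_splitQuotient.1 hs
        have hau : a ++ u ∈ W∗ := append_mem_kstar (mem_kstar_of_mem hW.1) hu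
        exact Language.append_mem_mul
          (mem_splitQuotient.2 ⟨a ++ u, hau, v, List.append_assoc .., hv⟩) ht

theorem leftQuotient_kstar (hw : w ≠ []) :
    (W∗).leftQuotient w = splitQuotient W∗ W w * W∗ := by
  ext y
  refine ⟨mem_splitQuotient_kstar_of_append_mem hw, fun h => ?_⟩
  obtain ⟨s, hs, t, ht, rfl⟩ := Language.mem_mul.1 h
  obtain ⟨u, hu, v, rfl, hvs⟩ := mem_splitQuotient.1 hs
  have huvst := append_mem_kstar (append_mem_kstar hu (mem_kstar_of_mem hvs)) ht
  rwa [Language.mem_leftQuotient, ← List.append_assoc, List.append_assoc u]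

theorem isRegular_of_finite (hW : (W : Set (List α)).Finite) : W.IsRegular := by
  refine .of_finite_range_leftQuotient
    ((hW.biUnion fun x _ => List.finite_toSet x.tails).finite_subsets.subset ?_)
  rintro _ ⟨w, rfl⟩ y hy
  exact mem_biUnion hy ((List.mem_tails _ _).2 (List.suffix_append w y))

theorem isRegular_mul (hA : A.IsRegular) (hB : B.IsRegular) : (A * B).IsRegular := by
  refine .of_finite_range_leftQuotient ((Finite.image2 (fun P Q => P * B + Q)
    hA.finite_range_leftQuotient
    (finite_range_splitQuotient A hB.finite_range_leftQuotient)).subset ?_)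
  rintro _ ⟨w, rfl⟩
  exact leftQuotient_mul A B w ▸ mem_image2_of_mem (mem_range_self w) (mem_range_self w)

theorem isRegular_kstar (hW : W.IsRegular) : (W∗ : Language α).IsRegular := by
  refine .of_finite_range_leftQuotient
    ((((finite_range_splitQuotient W∗ hW.finite_range_leftQuotient).image (· * W∗)).insert
      W∗).subset ?_)
  rintro _ ⟨w, rfl⟩
  rcases eq_or_ne w [] with rfl | hw
  · exact .inl (Language.leftQuotient_nil _)
  · exact .inr ⟨_, mem_range_self w, (leftQuotient_kstar hw).symm⟩

theorem IsRegLang.isRegular {W : Language X} (hW : IsRegLang W) : W.IsRegular := by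
  induction hW with
  | finite W hW => exact isRegular_of_finite hW
  | union W V _ _ hW hV => exact hW.add hV
  | concat W V _ _ hW hV => exact isRegular_mul hW hV
  | star W _ hW => exact isRegular_kstar hW

end RegularLanguages

section Kleene

variable {α σ : Type*} {M : DFA α σ} {S T : Set σ} {p q k : σ} {w : List α}

/-- A run of the automaton `M` reading `w` from `p` to `q` with all states strictly between its
first and its last one in `S`. -/
inductive IsPathThrough (M : DFA α σ) (S : Set σ) : σ → List α → σ → Prop
  | nil (p : σ) : IsPathThrough M S p [] p
  | singleton (p : σ) (a : α) : IsPathThrough M S p [a] (M.step p a)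
  | cons {p q : σ} {a : α} {w : List α} :
      M.step p a ∈ S → IsPathThrough M S (M.step p a) w q → IsPathThrough M S p (a :: w) q

theorem IsPathThrough.mono (hST : S ⊆ T) (h : IsPathThrough M S p w q) :
    IsPathThrough M T p w q := by
  induction h with
  | nil p => exact .nil p
  | singleton p a => exact .singleton p a
  | cons ha _ ih => exact .cons (hST ha) ih

theorem IsPathThrough.append {u v : List α} (hk : k ∈ S) (hu : IsPathThrough M S p u k)
    (hv : IsPathThrough M S k v q) : IsPathThrough M S p (u ++ v) q := by
  induction hu with
  | nil => exact hv
  | singleton => exact .cons hk hv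
  | cons ha _ ih => exact .cons ha (ih hk hv)

/-- The words read by the runs of `M` from `p` to `q` through `S`: the languages of Kleene's
construction of regular expressions from automata. -/
def pathLang (M : DFA α σ) (S : Set σ) (p q : σ) : Language α :=
  {w | IsPathThrough M S p w q}

theorem pathLang_mul_kstar_mul_le (M : DFA α σ) (hk : k ∈ S) (p q : σ) :
    pathLang M S p k * (pathLang M S k k)∗ * pathLang M S k q ≤ pathLang M S p q := by
  have mul_le (r : σ) : pathLang M S r k * pathLang M S k q ≤ pathLang M S r q := by
    rintro _ ⟨u, hu, v, hv, rfl⟩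
    exact IsPathThrough.append hk hu hv
  calc _ = pathLang M S p k * ((pathLang M S k k)∗ * pathLang M S k q) := mul_assoc ..
    _ ≤ pathLang M S p k * pathLang M S k q := by gcongr; exact kstar_mul_le_self (mul_le k)
    _ ≤ pathLang M S p q := mul_le p

theorem pathLang_insert_le (M : DFA α σ) (S : Set σ) (k p q : σ) :
    pathLang M (insert k S) p q ≤
      pathLang M S p q + pathLang M S p k * (pathLang M S k k)∗ * pathLang M S k q := by
  intro w h
  induction h with
  | nil p => exact .inl (.nil p)
  | singleton p a => exact .inl (.singleton p a)
  | @cons p q a w ha _ ih =>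
    rcases ha with rfl | ha
    · have hloop : w ∈ (pathLang M S (M.step p a) (M.step p a))∗ * pathLang M S (M.step p a) q := by
        rcases ih with hw | ⟨_, ⟨u, hu, v, hv, rfl⟩, z, hz, rfl⟩
        · exact Language.append_mem_mul (Language.nil_mem_kstar _) hw
        · exact Language.append_mem_mul (append_mem_kstar (mem_kstar_of_mem hu) hv) hz
      have hstep : [a] ∈ pathLang M S p (M.step p a) := .singleton p a
      exact .inr (mul_assoc (pathLang M S p _) _ _ ▸ Language.append_mem_mul hstep hloop)
    · rcases ih with hw | ⟨_, ⟨u, hu, v, hv, rfl⟩, z, hz, rfl⟩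
      · exact .inl (IsPathThrough.cons ha hw)
      · have hau : a :: u ∈ pathLang M S p _ := IsPathThrough.cons ha hu
        exact .inr (Language.append_mem_mul (Language.append_mem_mul hau hv) hz)

theorem pathLang_insert (M : DFA α σ) (S : Set σ) (k p q : σ) :
    pathLang M (insert k S) p q =
      pathLang M S p q + pathLang M S p k * (pathLang M S k k)∗ * pathLang M S k q := by
  have mono (r s : σ) : pathLang M S r s ≤ pathLang M (insert k S) r s :=
    fun _ => IsPathThrough.mono (subset_insert k S)
  refine le_antisymm (pathLang_insert_le M S k p q) (add_le (mono p q) ?_)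
  calc _ ≤ _ := by gcongr <;> apply mono
    _ ≤ pathLang M (insert k S) p q := pathLang_mul_kstar_mul_le M (mem_insert k S) p q

theorem finite_pathLang_empty [Finite α] (M : DFA α σ) (p q : σ) :
    (pathLang M ∅ p q : Set (List α)).Finite := by
  refine ((finite_range fun a : α => [a]).insert []).subset ?_
  rintro _ (_ | ⟨_, a⟩ | ⟨ha, _⟩)
  · exact mem_insert _ _
  · exact mem_insert_of_mem _ (mem_range_self a)
  · exact ha.elim

/-- The words that take the automaton `M` from the state `p` to the state `q`. -/
def transitLang (M : DFA α σ) (p q : σ) : Language α :=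
  {w | M.evalFrom p w = q}

theorem transitLang_eq_pathLang_univ (M : DFA α σ) (p q : σ) :
    transitLang M p q = pathLang M univ p q := by
  ext w
  constructor
  · rintro rfl
    induction w generalizing p with
    | nil => exact .nil p
    | cons a w ih => exact .cons (mem_univ _) (ih _)
  · intro h
    induction h with
    | nil p => rfl
    | singleton p a => rfl
    | cons _ _ ih => exact ih

theorem isRegLang_pathLang [Finite X] (M : DFA X σ) (hS : S.Finite) (p q : σ) :
    IsRegLang (pathLang M S p q) := by
  induction S, hS using Set.Finite.induction_on generalizing p q with
  | empty => exact .finite _ (finite_pathLang_empty M p q)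
  | @insert k S _ _ ih =>
    rw [pathLang_insert]
    exact .union _ _ (ih p q) (.concat _ _ (.concat _ _ (ih p k) (.star _ (ih k k))) (ih k q))

theorem isRegLang_transitLang [Finite X] [Finite σ] (M : DFA X σ) (p q : σ) :
    IsRegLang (transitLang M p q) :=
  transitLang_eq_pathLang_univ M p q ▸ isRegLang_pathLang M finite_univ p q

end Kleene

section OmegaWords

variable {u v w : List X} {ξ η ζ : ℕ → X}

theorem wcat_append (u v : List X) (η : ℕ → X) : wcat (u ++ v) η = wcat u (wcat v η) :=
  Stream'.append_append_stream u v η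

theorem wcat_injective (w : List X) : Function.Injective (wcat w) :=
  fun _ _ => Stream'.append_right_injective _ _ _

/-- The prefix of length `n` of an ω-word. -/
def wtake (n : ℕ) (ξ : ℕ → X) : List X :=
  Stream'.take n ξ

/-- The ω-word left after deleting the prefix of length `n`. -/
def wdrop (n : ℕ) (ξ : ℕ → X) : ℕ → X :=
  Stream'.drop n ξ

theorem length_wtake (n : ℕ) (ξ : ℕ → X) : (wtake n ξ).length = n :=
  Stream'.length_take n ξ

theorem getElem_wtake {n i : ℕ} (ξ : ℕ → X) (hi : i < (wtake n ξ).length) : (wtake n ξ)[i] = ξ i :=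
  Stream'.take_get _ _ _ hi

theorem wcat_wtake_wdrop (n : ℕ) (ξ : ℕ → X) : wcat (wtake n ξ) (wdrop n ξ) = ξ :=
  Stream'.append_take_drop n ξ

theorem wtake_length_add_wcat (w : List X) (n : ℕ) (η : ℕ → X) :
    wtake (w.length + n) (wcat w η) = w ++ wtake n η :=
  (Stream'.append_take ..).symm

theorem wtake_length_wcat (w : List X) (η : ℕ → X) : wtake w.length (wcat w η) = w :=
  (wtake_length_add_wcat w 0 η).trans (List.append_nil w)

theorem wtake_wcat_of_le_length {n : ℕ} (hn : n ≤ w.length) (η : ℕ → X) :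
    wtake n (wcat w η) = w.take n :=
  Stream'.take_append_of_le_length _ _ _ hn

theorem mem_cyl_wtake (n : ℕ) (ξ : ℕ → X) : ξ ∈ cyl (wtake n ξ) :=
  ⟨_, (wcat_wtake_wdrop n ξ).symm⟩

theorem mem_cyl_iff : ξ ∈ cyl w ↔ wtake w.length ξ = w :=
  ⟨fun ⟨η, hη⟩ => hη ▸ wtake_length_wcat w η, fun h => h ▸ mem_cyl_wtake _ ξ⟩

theorem exists_append_of_wcat_eq_wcat (h : wcat u η = wcat v ζ) (hl : u.length ≤ v.length) :
    ∃ r, v = u ++ r ∧ η = wcat r ζ := by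
  obtain ⟨r, rfl⟩ : u <+: v := List.prefix_iff_eq_take.2 <|
    calc u = wtake u.length (wcat v ζ) := h ▸ (wtake_length_wcat u η).symm
      _ = v.take u.length := wtake_wcat_of_le_length hl ζ
  exact ⟨r, rfl, wcat_injective u (h.trans (wcat_append u r ζ))⟩

end OmegaWords

section OmegaPower

variable {V : Language X} {A : Set (ℕ → X)} {v : List X} {ζ : ℕ → X}

theorem exists_eq_wcat_of_mem_omegaPow (hζ : ζ ∈ omegaPow V) :
    ∃ v ∈ V, v ≠ [] ∧ ∃ θ ∈ omegaPow V, ζ = wcat v θ := by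
  obtain ⟨f, hf, hcyl⟩ := hζ
  obtain ⟨θ, rfl⟩ : ζ ∈ cyl (f 0) := by simpa using hcyl 1
  refine ⟨f 0, (hf 0).1, (hf 0).2, θ, ⟨fun i => f (i + 1), fun i => hf (i + 1), fun k => ?_⟩, rfl⟩
  obtain ⟨η, hη⟩ := hcyl (k + 1)
  rw [List.range_succ_eq_map, List.map_cons, List.flatten_cons, wcat_append, List.map_map] at hη
  exact ⟨η, wcat_injective _ hη⟩

theorem subset_omegaPow (hA : ∀ ζ ∈ A, ∃ v ∈ V, v ≠ [] ∧ ∃ θ ∈ A, ζ = wcat v θ) :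
    A ⊆ omegaPow V := by
  choose! head headV headNe tail tailA eq using hA
  intro ζ hζ
  have htail (k : ℕ) : tail^[k] ζ ∈ A := Set.MapsTo.iterate tailA k hζ
  refine ⟨fun i => head (tail^[i] ζ), fun i => ⟨headV _ (htail i), headNe _ (htail i)⟩,
    fun k => ⟨tail^[k] ζ, ?_⟩⟩
  induction k with
  | zero => rfl
  | succ k ih =>
    rw [List.range_succ, List.map_append, List.flatten_append, wcat_append,
      Function.iterate_succ_apply']
    simpa using ih.trans (congrArg _ (eq _ (htail k)))

theorem wcat_mem_omegaPow (hv : v ∈ V) (hζ : ζ ∈ omegaPow V) : wcat v ζ ∈ omegaPow V := by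
  rcases eq_or_ne v [] with rfl | hne
  · exact hζ
  · refine subset_omegaPow (A := insert (wcat v ζ) (omegaPow V)) ?_ (mem_insert _ _)
    rintro _ (rfl | hθ)
    · exact ⟨v, hv, hne, ζ, mem_insert_of_mem _ hζ, rfl⟩
    · obtain ⟨u, hu, hune, η, hη, rfl⟩ := exists_eq_wcat_of_mem_omegaPow hθ
      exact ⟨u, hu, hune, η, mem_insert_of_mem _ hη, rfl⟩

theorem wcat_mem_omegaPow_of_mem_kstar (hv : v ∈ V∗) (hζ : ζ ∈ omegaPow V) :
    wcat v ζ ∈ omegaPow V := by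
  obtain ⟨factors, rfl, hV⟩ := Language.mem_kstar.1 hv
  clear hv
  induction factors with
  | nil => exact hζ
  | cons a factors ih =>
    rw [List.forall_mem_cons] at hV
    rw [List.flatten_cons, wcat_append]
    exact wcat_mem_omegaPow hV.1 (ih hV.2)

theorem exists_le_length_eq_wcat_of_mem_omegaPow (hζ : ζ ∈ omegaPow V) (n : ℕ) :
    ∃ u ∈ V∗, n ≤ u.length ∧ ∃ θ ∈ omegaPow V, ζ = wcat u θ := by
  induction n with
  | zero => exact ⟨[], Language.nil_mem_kstar _, le_rfl, ζ, hζ, rfl⟩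
  | succ n ih =>
    obtain ⟨u, hu, hn, θ, hθ, rfl⟩ := ih
    obtain ⟨v, hv, hne, η, hη, rfl⟩ := exists_eq_wcat_of_mem_omegaPow hθ
    refine ⟨u ++ v, append_mem_kstar hu (mem_kstar_of_mem hv), ?_, η, hη, (wcat_append u v η).symm⟩
    have := List.length_pos_iff.2 hne
    grind

end OmegaPower

section Residuals

variable {E : Set (ℕ → X)}

/-- The residual `w⁻¹·E` of an ω-language: the ω-words that complete `w` to an element of `E`. -/
def residual (E : Set (ℕ → X)) (w : List X) : Set (ℕ → X) :=
  wcat w ⁻¹' E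

theorem residual_append (E : Set (ℕ → X)) (u v : List X) :
    residual E (u ++ v) = residual (residual E u) v := by
  ext η
  exact iff_of_eq (congrArg (· ∈ E) (wcat_append u v η))

theorem residual_catOmega_omegaPow (W V : Language X) (w : List X) :
    residual (catOmega W (omegaPow V)) w =
      catOmega ((W * V∗).leftQuotient w) (omegaPow V) := by
  ext η
  constructor
  · rintro ⟨a, ha, ζ, hζ, h⟩
    -- Absorb so many factors of `ζ` into `u` that `w` becomes a prefix of `a ++ u`.
    obtain ⟨u, hu, hlen, θ, hθ, rfl⟩ := exists_le_length_eq_wcat_of_mem_omegaPow hζ w.length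
    rw [← wcat_append] at h
    obtain ⟨r, hr, rfl⟩ := exists_append_of_wcat_eq_wcat h (by grind)
    exact ⟨r, ⟨a, ha, u, hu, hr⟩, θ, hθ, rfl⟩
  · rintro ⟨r, ⟨a, ha, b, hb, hab⟩, θ, hθ, rfl⟩
    refine ⟨a, ha, wcat b θ, wcat_mem_omegaPow_of_mem_kstar hb hθ, ?_⟩
    rw [← wcat_append, ← wcat_append]
    exact congrArg (wcat · θ) hab.symm

theorem IsRegOmega.finite_range_residual (hE : IsRegOmega E) : (range (residual E)).Finite := by
  obtain ⟨n, W, V, hWV, rfl⟩ := hE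
  have hquot (i : Fin n) : (range (W i * (V i)∗).leftQuotient).Finite :=
    (IsRegLang.concat _ _ (hWV i).1 (.star _ (hWV i).2)).isRegular.finite_range_leftQuotient
  refine ((Set.Finite.pi' hquot).image fun Q => ⋃ i, catOmega (Q i) (omegaPow (V i))).subset ?_
  rintro _ ⟨w, rfl⟩
  refine ⟨fun i => (W i * (V i)∗).leftQuotient w, fun i => mem_range_self w, ?_⟩
  simp only [← residual_catOmega_omegaPow, residual, preimage_iUnion]

end Residuals

section RegularOmega

variable {E F : Set (ℕ → X)}

theorem isRegOmega_iUnion {ι : Type*} [Finite ι] {W V : ι → Language X}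
    (hW : ∀ i, IsRegLang (W i)) (hV : ∀ i, IsRegLang (V i)) :
    IsRegOmega (⋃ i, catOmega (W i) (omegaPow (V i))) := by
  obtain ⟨n, ⟨e⟩⟩ := Finite.exists_equiv_fin ι
  exact ⟨n, W ∘ e.symm, V ∘ e.symm, fun i => ⟨hW _, hV _⟩, (e.symm.iSup_comp
    (g := fun i => catOmega (W i) (omegaPow (V i)))).symm⟩

theorem IsRegOmega.union (hE : IsRegOmega E) (hF : IsRegOmega F) : IsRegOmega (E ∪ F) := by
  obtain ⟨n, W, V, hWV, rfl⟩ := hE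
  obtain ⟨m, W', V', hWV', rfl⟩ := hF
  have := isRegOmega_iUnion (W := Sum.elim W W') (V := Sum.elim V V')
    (Sum.rec (fun i => (hWV i).1) fun i => (hWV' i).1)
    (Sum.rec (fun i => (hWV i).2) fun i => (hWV' i).2)
  rwa [iUnion_sum] at this

end RegularOmega

section Buchi

open Filter

variable {σ : Type*} {M : DFA X σ} {p q r : σ} {w : List X} {ζ : ℕ → X}

theorem frequently_evalFrom_wtake_wcat (hw : M.evalFrom p w = r) :
    (∃ᶠ n in atTop, M.evalFrom p (wtake n (wcat w ζ)) = q) ↔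
      ∃ᶠ n in atTop, M.evalFrom r (wtake n ζ) = q := by
  conv_lhs => rw [← map_add_atTop_eq_nat w.length, frequently_map]
  simp only [add_comm _ w.length, wtake_length_add_wcat, DFA.evalFrom_of_append, hw]

theorem frequently_evalFrom_wtake_of_mem_omegaPow (hζ : ζ ∈ omegaPow (transitLang M q q)) :
    ∃ᶠ n in atTop, M.evalFrom q (wtake n ζ) = q := by
  rw [frequently_atTop]
  intro n
  obtain ⟨u, hu, hn, θ, -, rfl⟩ := exists_le_length_eq_wcat_of_mem_omegaPow hζ n
  have hloop : (transitLang M q q)∗ ≤ transitLang M q q := by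
    refine kstar_le_of_mul_le_left (by rintro _ rfl; rfl) ?_
    rintro _ ⟨v, hv, w, hw, rfl⟩
    exact (DFA.evalFrom_of_append ..).trans ((congrArg (M.evalFrom · w) hv).trans hw)
  exact ⟨u.length, hn, (wtake_length_wcat u θ).symm ▸ hloop hu⟩

theorem exists_wcat_frequently_evalFrom_wtake (m : ℕ)
    (hζ : ∃ᶠ n in atTop, M.evalFrom p (wtake n ζ) = q) :
    ∃ w ∈ transitLang M p q, m ≤ w.length ∧
      ∃ θ, (∃ᶠ n in atTop, M.evalFrom q (wtake n θ) = q) ∧ ζ = wcat w θ := by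
  obtain ⟨n, hmn, hn⟩ := frequently_atTop.1 hζ m
  refine ⟨wtake n ζ, hn, by rwa [length_wtake], wdrop n ζ, ?_, (wcat_wtake_wdrop n ζ).symm⟩
  rw [← wcat_wtake_wdrop n ζ] at hζ
  exact (frequently_evalFrom_wtake_wcat hn).1 hζ

theorem setOf_frequently_evalFrom_wtake_eq (M : DFA X σ) (p q : σ) :
    {ξ | ∃ᶠ n in atTop, M.evalFrom p (wtake n ξ) = q} =
      catOmega (transitLang M p q) (omegaPow (transitLang M q q)) := by
  ext ξ
  constructor
  · intro hξ
    obtain ⟨w, hw, -, θ, hθ, rfl⟩ := exists_wcat_frequently_evalFrom_wtake 0 hξ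
    let recurrent : Set (ℕ → X) := {ζ | ∃ᶠ n in atTop, M.evalFrom q (wtake n ζ) = q}
    refine ⟨w, hw, θ, subset_omegaPow (A := recurrent) (fun ζ hζ => ?_) hθ, rfl⟩
    obtain ⟨v, hv, hlen, η, hη, rfl⟩ := exists_wcat_frequently_evalFrom_wtake 1 hζ
    exact ⟨v, hv, List.length_pos_iff.1 hlen, η, hη, rfl⟩
  · rintro ⟨w, hw, θ, hθ, rfl⟩
    exact (frequently_evalFrom_wtake_wcat hw).2 (frequently_evalFrom_wtake_of_mem_omegaPow hθ)

/-- The ω-language accepted by `M` as a deterministic Büchi automaton: the ω-words whose run visits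
the accepting states infinitely often. -/
def buchiLanguage (M : DFA X σ) : Set (ℕ → X) :=
  {ξ | ∃ᶠ n in atTop, M.eval (wtake n ξ) ∈ M.accept}

theorem buchiLanguage_eq_iUnion [Finite σ] (M : DFA X σ) :
    buchiLanguage M = ⋃ q : M.accept,
      catOmega (transitLang M M.start q) (omegaPow (transitLang M q q)) := by
  simp only [← setOf_frequently_evalFrom_wtake_eq]
  ext ξ
  simp only [mem_iUnion, mem_ofPred_eq, ← frequently_exists]
  simp [buchiLanguage, DFA.eval]

theorem isRegOmega_buchiLanguage [Finite X] [Finite σ] (M : DFA X σ) :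
    IsRegOmega (buchiLanguage M) :=
  buchiLanguage_eq_iUnion M ▸ isRegOmega_iUnion
    (fun q : M.accept => isRegLang_transitLang M M.start q)
    fun q : M.accept => isRegLang_transitLang M q q

/-- The automaton whose states are the residuals of `E`, accepting in the residuals that belong to
`T`. -/
def residualDFA (E : Set (ℕ → X)) (T : Set (Set (ℕ → X))) : DFA X (range (residual E)) where
  step s a := ⟨residual s [a], by
    obtain ⟨_, w, rfl⟩ := s
    exact ⟨w ++ [a], residual_append E w [a]⟩⟩
  start := ⟨E, [], rfl⟩
  accept := {s | s.1 ∈ T}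

theorem coe_eval_residualDFA (E : Set (ℕ → X)) (T : Set (Set (ℕ → X))) (w : List X) :
    ((residualDFA E T).eval w : Set (ℕ → X)) = residual E w := by
  induction w using List.reverseRecOn with
  | nil => rfl
  | append_singleton w a ih =>
    rw [DFA.eval_append_singleton, residual_append, ← ih]
    rfl

theorem IsRegOmega.setOf_frequently_residual_mem [Finite X] {E : Set (ℕ → X)} (hE : IsRegOmega E)
    (T : Set (Set (ℕ → X))) :
    IsRegOmega {ξ | ∃ᶠ n in atTop, residual E (wtake n ξ) ∈ T} := by
  have := hE.finite_range_residual.to_subtype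
  simp only [← coe_eval_residualDFA E T]
  exact isRegOmega_buchiLanguage (residualDFA E T)

end Buchi

section Topology

open Filter Topology

attribute [local instance] cantorTop

variable {E : Set (ℕ → X)} {ξ : ℕ → X}

theorem cyl_wtake_eq_cylinder (ξ : ℕ → X) (n : ℕ) :
    cyl (wtake n ξ) = PiNat.cylinder (E := fun _ => X) ξ n := by
  ext η
  rw [mem_cyl_iff, length_wtake, PiNat.mem_cylinder_iff]
  simp [List.ext_getElem_iff, getElem_wtake, length_wtake]

theorem hasAntitoneBasis_nhds_cyl_wtake (ξ : ℕ → X) :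
    (𝓝 ξ).HasAntitoneBasis fun n => cyl (wtake n ξ) := by
  let : TopologicalSpace X := ⊥
  have : DiscreteTopology X := ⟨rfl⟩
  simp only [cyl_wtake_eq_cylinder]
  refine ⟨⟨fun U => ?_⟩, fun _ _ => PiNat.cylinder_anti ξ⟩
  refine ((PiNat.isTopologicalBasis_cylinders fun _ => X).mem_nhds_iff (a := ξ)).trans ?_
  constructor
  · rintro ⟨_, ⟨η, n, rfl⟩, hξ, hU⟩
    exact ⟨n, trivial, PiNat.mem_cylinder_iff_eq.1 hξ ▸ hU⟩
  · rintro ⟨n, -, hU⟩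
    exact ⟨_, ⟨ξ, n, rfl⟩, PiNat.self_mem_cylinder ξ n, hU⟩

theorem residual_eq_univ_iff {w : List X} : residual E w = univ ↔ cyl w ⊆ E := by
  rw [residual, preimage_eq_univ_iff]
  have hrange : range (wcat w) = cyl w := Set.ext fun _ => exists_congr fun _ => eq_comm
  rw [hrange]

theorem eventually_residual_eq_univ_iff :
    (∀ᶠ n in atTop, residual E (wtake n ξ) = univ) ↔ ξ ∈ interior E := by
  simp only [residual_eq_univ_iff, mem_interior_iff_mem_nhds]
  have basis := hasAntitoneBasis_nhds_cyl_wtake ξ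
  exact ⟨fun h => basis.mem_iff.2 h.exists, basis.eventually_subset⟩

theorem frequently_residual_eq_univ_iff :
    (∃ᶠ n in atTop, residual E (wtake n ξ) = univ) ↔ ξ ∈ interior E := by
  refine ⟨fun h => ?_, fun h => (eventually_residual_eq_univ_iff.2 h).frequently⟩
  simp only [residual_eq_univ_iff] at h
  exact mem_interior_iff_mem_nhds.2 ((hasAntitoneBasis_nhds_cyl_wtake ξ).mem_iff.2 h.exists)

theorem residual_compl_eq_univ_iff {w : List X} : residual Eᶜ w = univ ↔ residual E w = ∅ := by
  rw [residual, preimage_compl, compl_univ_iff, residual]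

theorem compl_closure_eq_setOf_frequently (E : Set (ℕ → X)) :
    (closure E)ᶜ = {ξ | ∃ᶠ n in atTop, residual E (wtake n ξ) ∈ ({∅} : Set (Set (ℕ → X)))} := by
  ext ξ
  simp only [← interior_compl, ← frequently_residual_eq_univ_iff, residual_compl_eq_univ_iff,
    mem_singleton_iff, mem_ofPred_eq]

theorem frontier_eq_setOf_frequently (E : Set (ℕ → X)) :
    frontier E =
      {ξ | ∃ᶠ n in atTop, residual E (wtake n ξ) ∈ ({∅, univ}ᶜ : Set (Set (ℕ → X)))} := by
  ext ξ
  rw [← not_iff_not, ← mem_compl_iff, compl_frontier_eq_union_interior, mem_union,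
    mem_ofPred_eq, not_frequently]
  simp only [mem_compl_iff, mem_insert_iff, mem_singleton_iff, not_not]
  constructor
  · rintro (h | h)
    · exact (eventually_residual_eq_univ_iff.2 h).mono fun _ => .inr
    · exact (eventually_residual_eq_univ_iff.2 h).mono fun _ hn =>
        .inl (residual_compl_eq_univ_iff.1 hn)
  · intro h
    rcases frequently_or_distrib.1 h.frequently with h | h
    · exact .inr (frequently_residual_eq_univ_iff.1
        (h.mono fun _ => residual_compl_eq_univ_iff.2))
    · exact .inl (frequently_residual_eq_univ_iff.1 h)

theorem IsRegOmega.compl_closure [Finite X] (hE : IsRegOmega E) : IsRegOmega (closure E)ᶜ :=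
  compl_closure_eq_setOf_frequently E ▸ hE.setOf_frequently_residual_mem {∅}

theorem IsRegOmega.frontier [Finite X] (hE : IsRegOmega E) : IsRegOmega (frontier E) :=
  frontier_eq_setOf_frequently E ▸ hE.setOf_frequently_residual_mem {∅, univ}ᶜ

theorem isMeagre_frontier_of_isOpen {Y : Type*} [TopologicalSpace Y] {U : Set Y} (hU : IsOpen U) :
    IsMeagre (frontier U) := by
  refine (isClosed_frontier.isNowhereDense_iff.2 ?_).isMeagre
  rw [← frontier_compl]
  exact interior_frontier hU.isClosed_compl

theorem symmDiff_compl_compl_closure_subset {Y : Type*} [TopologicalSpace Y] {U F : Set Y}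
    (hU : IsOpen U) : symmDiff Fᶜ (closure U)ᶜ ⊆ symmDiff F U ∪ frontier U := by
  rw [compl_symmDiff_compl, hU.frontier_eq]
  calc symmDiff F (closure U) ⊆ symmDiff F U ∪ symmDiff U (closure U) := symmDiff_triangle ..
    _ = symmDiff F U ∪ (closure U \ U) := by rw [symmDiff_of_le subset_closure]

variable {F G : Set (ℕ → X)}

theorem HasABP.union (hF : HasABP F) (hG : HasABP G) : HasABP (F ∪ G) := by
  obtain ⟨E, F', hE, hEo, hF', hF'm, hFE⟩ := hF
  obtain ⟨D, G', hD, hDo, hG', hG'm, hGD⟩ := hG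
  exact ⟨E ∪ D, F' ∪ G', hE.union hD, hEo.union hDo, hF'.union hG', hF'm.union hG'm,
    union_symmDiff_union_subset.trans (union_subset_union hFE hGD)⟩

theorem HasABP.compl [Finite X] (hF : HasABP F) : HasABP Fᶜ := by
  obtain ⟨E, F', hE, hEo, hF', hF'm, hFE⟩ := hF
  exact ⟨(closure E)ᶜ, F' ∪ frontier E, hE.compl_closure, isClosed_closure.isOpen_compl,
    hF'.union hE.frontier, hF'm.union (isMeagre_frontier_of_isOpen hEo),
    (symmDiff_compl_compl_closure_subset hEo).trans (union_subset_union_left _ hFE)⟩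

theorem HasABP.inter [Finite X] (hF : HasABP F) (hG : HasABP G) : HasABP (F ∩ G) := by
  rw [inter_eq_compl_compl_union_compl]
  exact (hF.compl.union hG.compl).compl

end Topology

theorem stmt10 {X : Type} [Fintype X] (hX : 2 ≤ Fintype.card X)
    (F G : Set (ℕ → X)) (hF : HasABP F) (hG : HasABP G) :
    HasABP (F ∪ G) ∧ HasABP (F ∩ G) ∧ HasABP (Set.univ \ F) :=
  ⟨hF.union hG, hF.inter hG, Set.compl_eq_univ_sdiff F ▸ hF.compl⟩

end AutoBaire
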